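/- arXiv:2505.09809 — 2 statements merged into one kernel-verified Lean document; each statement's English description precedes it below -/
import Mathlib

section
/- Among the 26 isomorphism classes J_1,...,J_26 of red/blue edge colourings of K_{3,3} (as enumerated in the paper), exactly four contain a colour-alternating 6-cycle as an injectively embedded subgraph: J_4, J_9, J_11, and J_12. The probability t_bip(C_6^A, J_ℓ) that a uniformly random injective homomorphism from C_6 to K_{3,3} is a colour-preserving homomorphism from C_6^A to J_ℓ equals 12/72 for ℓ = 4, 6/72 for ℓ = 9, 6/72 for ℓ = 11, 12/72 for ℓ = 12, and 0 for all other ℓ. -/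
open SimpleGraph Function

/-- An edge-coloured graph: a simple graph together with a symmetric colour function
(`true` = red, `false` = blue). -/
structure ECGraph (V : Type*) where
  graph : SimpleGraph V
  color : V → V → Bool
  color_symm : ∀ u v, color u v = color v u

/-- A colour-preserving homomorphism of edge-coloured graphs. -/
def IsHom {α β : Type*} (H : ECGraph α) (G : ECGraph β) (f : α → β) : Prop :=
  ∀ u v, H.graph.Adj u v → G.graph.Adj (f u) (f v) ∧ G.color (f u) (f v) = H.color u v

/-- Homomorphism density `t(H,G) = hom(H,G)/v(G)^{v(H)}`. -/
noncomputable def homDensity {α β : Type*} [Fintype α] [Fintype β]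
    (H : ECGraph α) (G : ECGraph β) : ℝ :=
  (Nat.card {f : α → β // IsHom H G f} : ℝ) / (Fintype.card β : ℝ) ^ (Fintype.card α)

/-- Injective homomorphism density
`t_inj(H,G) = hom_inj(H,G)·(v(G)-v(H))!/v(G)!`. -/
noncomputable def injDensity {α β : Type*} [Fintype α] [Fintype β]
    (H : ECGraph α) (G : ECGraph β) : ℝ :=
  (Nat.card {f : α → β // Injective f ∧ IsHom H G f} : ℝ) *
    (Nat.factorial (Fintype.card β - Fintype.card α)) / (Nat.factorial (Fintype.card β))

/-- The alternating 6-cycle `C_6^A`: the 6-cycle with edges coloured alternately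
red and blue, so that every vertex is incident to one red and one blue edge. -/
def C6A : ECGraph (Fin 6) where
  graph := cycleGraph 6
  color u v := decide ((v = u + 1 ∧ Even u.val) ∨ (u = v + 1 ∧ Even v.val))
  color_symm u v := by rw [decide_eq_decide]; tauto

abbrev V33 := Fin 3 ⊕ Fin 3

def K33 : SimpleGraph V33 := completeBipartiteGraph (Fin 3) (Fin 3)

/-- Isomorphism of edge-coloured graphs on the vertex set of `K_{3,3}`:
a bijection of the vertices preserving adjacency and edge colours. -/
def ColIso (J J' : ECGraph V33) : Prop :=
  ∃ e : V33 ≃ V33, (∀ u v, J.graph.Adj u v ↔ J'.graph.Adj (e u) (e v)) ∧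
    ∀ u v, J.graph.Adj u v → J'.color (e u) (e v) = J.color u v

/-- The number of colour-preserving automorphisms of an edge-coloured graph `J`. -/
noncomputable def autC (J : ECGraph V33) : ℕ :=
  Nat.card {e : V33 ≃ V33 // (∀ u v, J.graph.Adj u v ↔ J.graph.Adj (e u) (e v)) ∧
    ∀ u v, J.graph.Adj u v → J.color (e u) (e v) = J.color u v}

/-- `d(J, G) = (72/aut(J)) · t_inj(J, G)`. -/
noncomputable def dJ {V : Type*} [Fintype V] (J : ECGraph V33) (G : ECGraph V) : ℝ :=
  (72 / (autC J : ℝ)) * injDensity J G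

/-- `t_bip(H, J)`: the probability that a uniformly random injective graph homomorphism
from the underlying graph of `H` into `K_{3,3}` is a colour-preserving homomorphism
from `H` to `J`. -/
noncomputable def tbip {α : Type*} [Fintype α] (H : ECGraph α) (J : ECGraph V33) : ℝ :=
  (Nat.card {f : α → V33 // Function.Injective f ∧ IsHom H J f} : ℝ) /
    (Nat.card {f : α → V33 // Function.Injective f ∧
      ∀ u v, H.graph.Adj u v → K33.Adj (f u) (f v)} : ℝ)

/-- Build an edge colouring of `K_{3,3}` from a `3 × 3` Boolean matrix
(`m i j` is the colour of the edge between left vertex `i` and right vertex `j`;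
`true` = red, `false` = blue). -/
def mkCol (m : Fin 3 → Fin 3 → Bool) : ECGraph V33 where
  graph := K33
  color u v := match u, v with
    | .inl i, .inr j => m i j
    | .inr j, .inl i => m i j
    | _, _ => false
  color_symm u v := by cases u <;> cases v <;> rfl

/-- `J_4`: the blue edges form a perfect matching. -/
def J4 : ECGraph V33 := mkCol fun i j => decide (i ≠ j)

/-- `J_9` of the paper's Figure 1. -/
def J9 : ECGraph V33 := mkCol fun i j =>
  !decide ((i, j) = (0, 0) ∨ (i, j) = (0, 1) ∨ (i, j) = (1, 0) ∨ (i, j) = (2, 2))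

/-- `J_11` of the paper's Figure 1. -/
def J11 : ECGraph V33 := mkCol fun i j =>
  !decide ((i, j) = (0, 0) ∨ (i, j) = (0, 1) ∨ (i, j) = (1, 0) ∨ (i, j) = (1, 2) ∨
    (i, j) = (2, 1))

/-- `J_12`: the red edges form a perfect matching. -/
def J12 : ECGraph V33 := mkCol fun i j =>
  decide ((i, j) = (0, 2) ∨ (i, j) = (1, 1) ∨ (i, j) = (2, 0))

def side (s : Bool) (a : Fin 3) : V33 := if s then Sum.inl a else Sum.inr a

abbrev TT := Bool × (Fin 3 → Fin 3) × (Fin 3 → Fin 3)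

def FF (t : TT) : Fin 6 → V33 :=
  ![side t.1 (t.2.1 0), side (!t.1) (t.2.2 0), side t.1 (t.2.1 1), side (!t.1) (t.2.2 1),
    side t.1 (t.2.1 2), side (!t.1) (t.2.2 2)]

instance decK33 : DecidableRel K33.Adj := fun u v =>
  inferInstanceAs (Decidable ((u.isLeft ∧ v.isRight) ∨ (u.isRight ∧ v.isLeft)))

theorem side_inj {s : Bool} {a b : Fin 3} (h : side s a = side s b) : a = b := by
  cases s <;> simpa [side] using h

theorem side_inj_fst {s s' : Bool} {a b : Fin 3} (h : side s a = side s' b) : s = s' := by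
  cases s <;> cases s' <;> simp [side] at h ⊢

theorem exists_side (x : V33) : ∃ s a, x = side s a := by
  rcases x with a | a
  · exact ⟨true, a, rfl⟩
  · exact ⟨false, a, rfl⟩

theorem adj_side {s : Bool} {a : Fin 3} {y : V33} (h : K33.Adj (side s a) y) :
    ∃ b, y = side (!s) b := by
  rcases y with b | b <;> cases s <;> simp [side, K33] at h ⊢

theorem FF_inj : Injective FF := by
  rintro ⟨s, p, q⟩ ⟨s', p', q'⟩ h
  have h0 := congrFun h 0
  have h1 := congrFun h 1
  have h2 := congrFun h 2
  have h3 := congrFun h 3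
  have h4 := congrFun h 4
  have h5 := congrFun h 5
  simp only [FF] at h0 h1 h2 h3 h4 h5
  have hs : s = s' := side_inj_fst h0
  subst hs
  have e0 := side_inj h0
  have e1 := side_inj h1
  have e2 := side_inj h2
  have e3 := side_inj h3
  have e4 := side_inj h4
  have e5 := side_inj h5
  have hp : p = p' := by funext i; fin_cases i <;> assumption
  have hq : q = q' := by funext i; fin_cases i <;> assumption
  rw [hp, hq]

theorem FF_surj (f : Fin 6 → V33) (h : ∀ i, K33.Adj (f i) (f (i + 1))) : ∃ t, FF t = f := by
  obtain ⟨s, a0, h0⟩ := exists_side (f 0)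
  have k0 : K33.Adj (f 0) (f 1) := h 0
  have k1 : K33.Adj (f 1) (f 2) := h 1
  have k2 : K33.Adj (f 2) (f 3) := h 2
  have k3 : K33.Adj (f 3) (f 4) := h 3
  have k4 : K33.Adj (f 4) (f 5) := h 4
  rw [h0] at k0
  obtain ⟨a1, h1⟩ := adj_side k0
  rw [h1] at k1
  obtain ⟨a2, h2⟩ := adj_side k1
  rw [h2] at k2
  obtain ⟨a3, h3⟩ := adj_side k2
  rw [h3] at k3
  obtain ⟨a4, h4⟩ := adj_side k3
  rw [h4] at k4
  obtain ⟨a5, h5⟩ := adj_side k4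
  simp only [Bool.not_not] at h2 h3 h4 h5
  refine ⟨(s, ![a0, a2, a4], ![a1, a3, a5]), ?_⟩
  funext i
  fin_cases i
  · exact h0.symm
  · exact h1.symm
  · exact h2.symm
  · exact h3.symm
  · exact h4.symm
  · exact h5.symm

theorem C6A_adj (u v : Fin 6) : C6A.graph.Adj u v ↔ (v = u + 1 ∨ u = v + 1) := by
  change (cycleGraph 6).Adj u v ↔ _
  revert u v
  decide

theorem C6A_col (u : Fin 6) : C6A.color u (u + 1) = decide (u.val % 2 = 0) := by
  revert u
  decide

theorem hom_iff (J : ECGraph V33) (f : Fin 6 → V33) : IsHom C6A J f ↔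
    ∀ i, J.graph.Adj (f i) (f (i + 1)) ∧ J.color (f i) (f (i + 1)) = decide (i.val % 2 = 0) := by
  constructor
  · intro h i
    rw [← C6A_col]
    exact h i (i + 1) ((C6A_adj _ _).2 (Or.inl rfl))
  · intro h u v huv
    rcases (C6A_adj _ _).1 huv with rfl | rfl
    · rw [C6A_col]; exact h u
    · rw [C6A.color_symm, C6A_col, J.color_symm]; exact ⟨(h v).1.symm, (h v).2⟩

theorem hom_iff' (f : Fin 6 → V33) :
    (∀ u v, C6A.graph.Adj u v → K33.Adj (f u) (f v)) ↔ ∀ i, K33.Adj (f i) (f (i + 1)) := by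
  constructor
  · intro h i
    exact h i (i + 1) ((C6A_adj _ _).2 (Or.inl rfl))
  · intro h u v huv
    rcases (C6A_adj _ _).1 huv with rfl | rfl
    · exact h u
    · exact (h v).symm

theorem card_FF (Q : (Fin 6 → V33) → Prop) (hQ : ∀ f, Q f → ∀ i, K33.Adj (f i) (f (i + 1))) :
    Nat.card {f // Q f} = Nat.card {t : TT // Q (FF t)} := by
  symm
  refine Nat.card_congr (Equiv.ofBijective (fun t => ⟨FF t.1, t.2⟩) ⟨?_, ?_⟩)
  · intro a b hab
    exact Subtype.ext (FF_inj (congrArg Subtype.val hab))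
  · rintro ⟨f, hf⟩
    obtain ⟨t, rfl⟩ := FF_surj f (hQ f hf)
    exact ⟨⟨t, hf⟩, rfl⟩

theorem FF_injective_iff (t : TT) : Injective (FF t) ↔ (Injective t.2.1 ∧ Injective t.2.2) := by
  obtain ⟨s, p, q⟩ := t
  have hp : ∀ k : Fin 3, FF (s, p, q) ⟨2 * k.val, by omega⟩ = side s (p k) := by
    intro k; fin_cases k <;> rfl
  have hq : ∀ k : Fin 3, FF (s, p, q) ⟨2 * k.val + 1, by omega⟩ = side (!s) (q k) := by
    intro k; fin_cases k <;> rfl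
  have hc : ∀ i : Fin 6, ∃ k : Fin 3, i = ⟨2 * k.val, by omega⟩ ∨ i = ⟨2 * k.val + 1, by omega⟩ := by
    decide
  constructor
  · intro h
    constructor
    · intro a b hab
      have := @h ⟨2 * a.val, by omega⟩ ⟨2 * b.val, by omega⟩ (by
        rw [hp, hp]; exact congrArg _ hab)
      simp only [Fin.mk.injEq] at this
      omega
    · intro a b hab
      have := @h ⟨2 * a.val + 1, by omega⟩ ⟨2 * b.val + 1, by omega⟩ (by
        rw [hq, hq]; exact congrArg _ hab)
      simp only [Fin.mk.injEq] at this
      omega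
  · rintro ⟨h1, h2⟩ i j hij
    obtain ⟨a, rfl | rfl⟩ := hc i <;> obtain ⟨b, rfl | rfl⟩ := hc j
    · rw [hp, hp] at hij
      rw [h1 (side_inj hij)]
    · rw [hp, hq] at hij
      have := side_inj_fst hij
      simp at this
    · rw [hq, hp] at hij
      have := side_inj_fst hij
      simp at this
    · rw [hq, hq] at hij
      rw [h2 (side_inj hij)]

def Q0 (t : TT) : Prop := (Injective t.2.1 ∧ Injective t.2.2) ∧
  ∀ i, K33.Adj (FF t i) (FF t (i + 1))

instance : DecidablePred Q0 := fun t => by unfold Q0; infer_instance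

def QJ (m : Fin 3 → Fin 3 → Bool) (t : TT) : Prop := (Injective t.2.1 ∧ Injective t.2.2) ∧
  ∀ i, K33.Adj (FF t i) (FF t (i + 1)) ∧
    (mkCol m).color (FF t i) (FF t (i + 1)) = decide (i.val % 2 = 0)

instance (m) : DecidablePred (QJ m) := fun t => by unfold QJ; infer_instance

theorem card_den : Nat.card {f : Fin 6 → V33 // Injective f ∧
      ∀ u v, C6A.graph.Adj u v → K33.Adj (f u) (f v)} = 72 := by
  rw [card_FF _ (fun f hf => (hom_iff' f).1 hf.2)]
  simp only [FF_injective_iff, hom_iff']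
  change Nat.card {t : TT // Q0 t} = 72
  rw [Nat.card_eq_fintype_card]
  decide +kernel

theorem card_num (m : Fin 3 → Fin 3 → Bool) :
    Nat.card {f : Fin 6 → V33 // Injective f ∧ IsHom C6A (mkCol m) f} =
      Fintype.card {t : TT // QJ m t} := by
  rw [card_FF _ (fun f hf i => ((hom_iff _ f).1 hf.2 i).1)]
  simp only [FF_injective_iff, hom_iff]
  change Nat.card {t : TT // QJ m t} = _
  rw [Nat.card_eq_fintype_card]

theorem tbip_J4 : tbip C6A J4 = 12 / 72 := by
  unfold tbip J4
  rw [card_den, card_num]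
  have : Fintype.card {t : TT // QJ (fun i j => decide (i ≠ j)) t} = 12 := by decide +kernel
  rw [this]; norm_num

theorem tbip_J9 : tbip C6A J9 = 6 / 72 := by
  unfold tbip J9
  rw [card_den, card_num]
  have : Fintype.card {t : TT // QJ (fun i j =>
    !decide ((i, j) = (0, 0) ∨ (i, j) = (0, 1) ∨ (i, j) = (1, 0) ∨ (i, j) = (2, 2))) t} = 6 := by
    decide +kernel
  rw [this]; norm_num

theorem tbip_J11 : tbip C6A J11 = 6 / 72 := by
  unfold tbip J11
  rw [card_den, card_num]
  have : Fintype.card {t : TT // QJ (fun i j =>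
    !decide ((i, j) = (0, 0) ∨ (i, j) = (0, 1) ∨ (i, j) = (1, 0) ∨ (i, j) = (1, 2) ∨
    (i, j) = (2, 1))) t} = 6 := by
    decide +kernel
  rw [this]; norm_num

theorem tbip_J12 : tbip C6A J12 = 12 / 72 := by
  unfold tbip J12
  rw [card_den, card_num]
  have : Fintype.card {t : TT // QJ (fun i j =>
    decide ((i, j) = (0, 2) ∨ (i, j) = (1, 1) ∨ (i, j) = (2, 0))) t} = 12 := by
    decide +kernel
  rw [this]; norm_num

noncomputable def redCard (J : ECGraph V33) : ℕ :=
  Nat.card {p : V33 × V33 // J.graph.Adj p.1 p.2 ∧ J.color p.1 p.2 = true}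

theorem redCard_iso {J J' : ECGraph V33} (h : ColIso J J') : redCard J = redCard J' := by
  obtain ⟨e, h1, h2⟩ := h
  refine Nat.card_congr (Equiv.subtypeEquiv (Equiv.prodCongr e e) ?_)
  rintro ⟨u, v⟩
  simp only [Equiv.prodCongr_apply, Prod.map]
  constructor
  · rintro ⟨a, b⟩
    exact ⟨(h1 u v).1 a, (h2 u v a).trans b⟩
  · rintro ⟨a, b⟩
    have a' := (h1 u v).2 a
    exact ⟨a', (h2 u v a').symm.trans b⟩

theorem redCard_mk (m : Fin 3 → Fin 3 → Bool) : redCard (mkCol m) =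
    Fintype.card {p : V33 × V33 // K33.Adj p.1 p.2 ∧ (mkCol m).color p.1 p.2 = true} := by
  unfold redCard
  change Nat.card {p : V33 × V33 // K33.Adj p.1 p.2 ∧ (mkCol m).color p.1 p.2 = true} = _
  rw [Nat.card_eq_fintype_card]

theorem red4 : redCard J4 = 12 := by
  unfold J4; rw [redCard_mk]; decide +kernel
theorem red9 : redCard J9 = 10 := by
  unfold J9; rw [redCard_mk]; decide +kernel
theorem red11 : redCard J11 = 8 := by
  unfold J11; rw [redCard_mk]; decide +kernel
theorem red12 : redCard J12 = 6 := by
  unfold J12; rw [redCard_mk]; decide +kernel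

theorem ColIso.trans' {A B C : ECGraph V33} (h : ColIso A B) (h' : ColIso B C) : ColIso A C := by
  obtain ⟨e, h1, h2⟩ := h
  obtain ⟨e', h1', h2'⟩ := h'
  refine ⟨e.trans e', fun u v => (h1 u v).trans (h1' _ _), fun u v huv => ?_⟩
  exact (h2' _ _ ((h1 u v).1 huv)).trans (h2 u v huv)

theorem hom_iso {J J' : ECGraph V33} (h : ColIso J J')
    (hf : ∃ f : Fin 6 → V33, Injective f ∧ IsHom C6A J f) :
    ∃ f : Fin 6 → V33, Injective f ∧ IsHom C6A J' f := by
  obtain ⟨e, h1, h2⟩ := h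
  obtain ⟨f, hi, hf⟩ := hf
  refine ⟨e ∘ f, e.injective.comp hi, fun u v huv => ?_⟩
  obtain ⟨a, b⟩ := hf u v huv
  exact ⟨(h1 _ _).1 a, (h2 _ _ a).trans b⟩

theorem hom_of_tbip {J : ECGraph V33} (h : tbip C6A J ≠ 0) :
    ∃ f : Fin 6 → V33, Injective f ∧ IsHom C6A J f := by
  by_contra hn
  apply h
  unfold tbip
  have : IsEmpty {f : Fin 6 → V33 // Injective f ∧ IsHom C6A J f} :=
    ⟨fun f => hn ⟨f.1, f.2⟩⟩
  simp [Nat.card_of_isEmpty]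

/-- The colourings of the standard alternating cycle, with three free edges. -/
def mat (a b c : Bool) : Fin 3 → Fin 3 → Bool :=
  ![![true, a, false], ![false, true, b], ![c, false, true]]

def isoB (m m' : Fin 3 → Fin 3 → Bool) : Prop :=
  ∃ p q : Equiv.Perm (Fin 3), ∀ i j, m' (p i) (q j) = m i j

instance (m m') : Decidable (isoB m m') := by unfold isoB; infer_instance

theorem isoB_ColIso {m m' : Fin 3 → Fin 3 → Bool} (h : isoB m m') :
    ColIso (mkCol m) (mkCol m') := by
  obtain ⟨p, q, h⟩ := h
  refine ⟨Equiv.sumCongr p q, ?_, ?_⟩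
  · rintro (u | u) (v | v) <;> simp [mkCol, K33]
  · rintro (u | u) (v | v) <;> simp [mkCol, K33, h]

theorem mat_cases (a b c : Bool) : ColIso J4 (mkCol (mat a b c)) ∨ ColIso J9 (mkCol (mat a b c)) ∨
    ColIso J11 (mkCol (mat a b c)) ∨ ColIso J12 (mkCol (mat a b c)) := by
  have key : ∀ a b c : Bool, isoB (fun i j => decide (i ≠ j)) (mat a b c) ∨
      isoB (fun i j =>
        !decide ((i, j) = (0, 0) ∨ (i, j) = (0, 1) ∨ (i, j) = (1, 0) ∨ (i, j) = (2, 2)))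
        (mat a b c) ∨
      isoB (fun i j =>
        !decide ((i, j) = (0, 0) ∨ (i, j) = (0, 1) ∨ (i, j) = (1, 0) ∨ (i, j) = (1, 2) ∨
          (i, j) = (2, 1))) (mat a b c) ∨
      isoB (fun i j => decide ((i, j) = (0, 2) ∨ (i, j) = (1, 1) ∨ (i, j) = (2, 0)))
        (mat a b c) := by decide +kernel
  rcases key a b c with h | h | h | h
  · exact Or.inl (isoB_ColIso h)
  · exact Or.inr (Or.inl (isoB_ColIso h))
  · exact Or.inr (Or.inr (Or.inl (isoB_ColIso h)))
  · exact Or.inr (Or.inr (Or.inr (isoB_ColIso h)))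

theorem mat_of_hom (J : ECGraph V33) (hJ : J.graph = K33) (f : Fin 6 → V33) (hi : Injective f)
    (hf : IsHom C6A J f) : ∃ a b c, ColIso (mkCol (mat a b c)) J := by
  rw [hom_iff] at hf
  obtain ⟨⟨s, p, q⟩, rfl⟩ := FF_surj f (fun i => hJ ▸ (hf i).1)
  obtain ⟨hp, hq⟩ := (FF_injective_iff _).1 hi
  simp only at hp hq
  have hc : ∀ i, J.color (FF (s, p, q) i) (FF (s, p, q) (i + 1)) = decide (i.val % 2 = 0) :=
    fun i => (hf i).2
  have c0 : J.color (side s (p 0)) (side (!s) (q 0)) = true := hc 0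
  have c1 : J.color (side (!s) (q 0)) (side s (p 1)) = false := hc 1
  have c2 : J.color (side s (p 1)) (side (!s) (q 1)) = true := hc 2
  have c3 : J.color (side (!s) (q 1)) (side s (p 2)) = false := hc 3
  have c4 : J.color (side s (p 2)) (side (!s) (q 2)) = true := hc 4
  have c5 : J.color (side (!s) (q 2)) (side s (p 0)) = false := hc 5
  rw [J.color_symm] at c1 c3 c5
  let g : V33 → V33 := Sum.elim (fun i => side s (p i)) (fun j => side (!s) (q j))
  have gi : Injective g := by
    rintro (u | u) (v | v) h
    · exact congrArg _ (hp (side_inj h))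
    · have := side_inj_fst h
      simp at this
    · have := side_inj_fst h
      simp at this
    · exact congrArg _ (hq (side_inj h))
  have hm : ∀ i j, J.color (side s (p i)) (side (!s) (q j)) =
      mat (J.color (side s (p 0)) (side (!s) (q 1))) (J.color (side s (p 1)) (side (!s) (q 2)))
        (J.color (side s (p 2)) (side (!s) (q 0))) i j := by
    intro i j
    fin_cases i <;> fin_cases j <;> simp [mat, *]
  refine ⟨J.color (side s (p 0)) (side (!s) (q 1)), J.color (side s (p 1)) (side (!s) (q 2)),
    J.color (side s (p 2)) (side (!s) (q 0)),
    Equiv.ofBijective g (Finite.injective_iff_bijective.1 gi), ?_, ?_⟩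
  · rw [hJ]
    rintro (u | u) (v | v) <;> cases s <;> simp [mkCol, K33, g, side]
  · rintro (u | u) (v | v) huv
    · simp [mkCol, K33] at huv
    · exact hm u v
    · exact (J.color_symm _ _).trans (hm v u)
    · simp [mkCol, K33] at huv

/-- `J_4`, `J_9`, `J_11`, `J_12` are pairwise non-isomorphic;
`t_bip(C_6^A, J_ℓ)` equals `12/72`, `6/72`, `6/72`, `12/72` for `ℓ = 4, 9, 11, 12`
respectively; and a colouring of `K_{3,3}` contains an injectively embedded alternating
6-cycle iff it is isomorphic to one of these four, so `t_bip(C_6^A, ·)` vanishes at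
every colouring not isomorphic to one of them. -/
theorem tbip_C6A_values :
    (¬ColIso J4 J9 ∧ ¬ColIso J4 J11 ∧ ¬ColIso J4 J12 ∧ ¬ColIso J9 J11 ∧
      ¬ColIso J9 J12 ∧ ¬ColIso J11 J12) ∧
    tbip C6A J4 = 12 / 72 ∧ tbip C6A J9 = 6 / 72 ∧ tbip C6A J11 = 6 / 72 ∧
    tbip C6A J12 = 12 / 72 ∧
    ∀ J' : ECGraph V33, J'.graph = K33 →
      ((∃ f : Fin 6 → V33, Function.Injective f ∧ IsHom C6A J' f) ↔
        (ColIso J4 J' ∨ ColIso J9 J' ∨ ColIso J11 J' ∨ ColIso J12 J')) ∧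
      ((¬ColIso J4 J' ∧ ¬ColIso J9 J' ∧ ¬ColIso J11 J' ∧ ¬ColIso J12 J') →
        tbip C6A J' = 0) := by 
  have main : ∀ J' : ECGraph V33, J'.graph = K33 →
      ((∃ f : Fin 6 → V33, Function.Injective f ∧ IsHom C6A J' f) ↔
        (ColIso J4 J' ∨ ColIso J9 J' ∨ ColIso J11 J' ∨ ColIso J12 J')) := by
    intro J' hJ
    constructor
    · rintro ⟨f, hi, hf⟩
      obtain ⟨a, b, c, h⟩ := mat_of_hom J' hJ f hi hf
      rcases mat_cases a b c with h' | h' | h' | h'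
      · exact Or.inl (h'.trans' h)
      · exact Or.inr (Or.inl (h'.trans' h))
      · exact Or.inr (Or.inr (Or.inl (h'.trans' h)))
      · exact Or.inr (Or.inr (Or.inr (h'.trans' h)))
    · rintro (h | h | h | h)
      · exact hom_iso h (hom_of_tbip (by rw [tbip_J4]; norm_num))
      · exact hom_iso h (hom_of_tbip (by rw [tbip_J9]; norm_num))
      · exact hom_iso h (hom_of_tbip (by rw [tbip_J11]; norm_num))
      · exact hom_iso h (hom_of_tbip (by rw [tbip_J12]; norm_num))
  have r4 := red4
  have r9 := red9
  have r11 := red11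
  have r12 := red12
  refine ⟨⟨?_, ?_, ?_, ?_, ?_, ?_⟩, tbip_J4, tbip_J9, tbip_J11, tbip_J12,
    fun J' hJ => ⟨main J' hJ, ?_⟩⟩
  iterate 6
    · intro h
      have := redCard_iso h
      omega
  · rintro ⟨h4, h9, h11, h12⟩
    by_contra hn
    rcases (main J' hJ).1 (hom_of_tbip hn) with h | h | h | h
    · exact h4 h
    · exact h9 h
    · exact h11 h
    · exact h12 h
end

section
/- Every edge-coloured graph G on n vertices satisfies t_inj(C_6^A, G) ≤ (1/2)^6 + O(1/n), where the implicit constant is absolute. -/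
open SimpleGraph Function

lemma aux_ineq {V : Type*} [Fintype V] [DecidableEq V] (c x : V → ℝ) (n : ℝ)
    (hx : ∑ i, x i ^ 2 ≤ n ^ 2) :
    0 ≤ ∑ i, ∑ j, c i ^ 2 * c j ^ 2 *
      ((n ^ 2 - (x i ^ 2 + x j ^ 2)) * (x i ^ 2 + x j ^ 2 - x i * x j) + (x i * x j) ^ 2) := by
  refine Finset.sum_nonneg fun i _ => Finset.sum_nonneg fun j _ => ?_
  refine mul_nonneg (by positivity) ?_
  by_cases h : i = j
  · subst h
    have h1 : x i ^ 2 ≤ n ^ 2 :=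
      (Finset.single_le_sum (f := fun i => x i ^ 2) (fun i _ => sq_nonneg _)
        (Finset.mem_univ i)).trans hx
    nlinarith [mul_nonneg (sq_nonneg (x i)) (sub_nonneg.2 h1)]
  · have h1 : x i ^ 2 + x j ^ 2 ≤ n ^ 2 := by
      refine le_trans ?_ hx
      rw [← Finset.sum_pair (f := fun i => x i ^ 2) h]
      exact Finset.sum_le_sum_of_subset_of_nonneg (Finset.subset_univ _)
        (fun i _ _ => sq_nonneg _)
    have h2 : 0 ≤ x i ^ 2 + x j ^ 2 - x i * x j := by
      nlinarith [sq_nonneg (x i - x j), sq_nonneg (x i), sq_nonneg (x j)]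
    have := mul_nonneg (sub_nonneg.2 h1) h2
    positivity

lemma sum_quartic {V : Type*} [Fintype V] (c x : V → ℝ) (a0 a1 a2 a3 a4 : ℝ) :
    ∑ i, c i ^ 2 * (a0 + a1 * x i + a2 * x i ^ 2 + a3 * x i ^ 3 + a4 * x i ^ 4) =
      a0 * (∑ i, c i ^ 2) + a1 * (∑ i, c i ^ 2 * x i) + a2 * (∑ i, c i ^ 2 * x i ^ 2)
       + a3 * (∑ i, c i ^ 2 * x i ^ 3) + a4 * (∑ i, c i ^ 2 * x i ^ 4) := by
  simp only [Finset.mul_sum, ← Finset.sum_add_distrib]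
  exact Finset.sum_congr rfl fun i _ => by ring

lemma sum_quartic' {V : Type*} [Fintype V] (c x F : V → ℝ) (a0 a1 a2 a3 a4 : ℝ)
    (h : ∀ i, F i = c i ^ 2 * (a0 + a1 * x i + a2 * x i ^ 2 + a3 * x i ^ 3 + a4 * x i ^ 4)) :
    ∑ i, F i =
      a0 * (∑ i, c i ^ 2) + a1 * (∑ i, c i ^ 2 * x i) + a2 * (∑ i, c i ^ 2 * x i ^ 2)
       + a3 * (∑ i, c i ^ 2 * x i ^ 3) + a4 * (∑ i, c i ^ 2 * x i ^ 4) := by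
  rw [← sum_quartic]; exact Finset.sum_congr rfl fun i _ => h i

lemma aux_ineq' {V : Type*} [Fintype V] [DecidableEq V] (c x : V → ℝ) (n : ℝ)
    (hc : ∑ i, c i ^ 2 = n) (hx : ∑ i, x i ^ 2 ≤ n ^ 2) (w1 w2 w3 w4 : ℝ)
    (h1 : ∑ i, c i ^ 2 * x i = w1) (h2 : ∑ i, c i ^ 2 * x i ^ 2 = w2)
    (h3 : ∑ i, c i ^ 2 * x i ^ 3 = w3) (h4 : ∑ i, c i ^ 2 * x i ^ 4 = w4) :
    0 ≤ 2 * w2 * n ^ 3 - 2 * w4 * n - w1 ^ 2 * n ^ 2 + 2 * w1 * w3 - w2 ^ 2 := by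
  have := aux_ineq c x n hx
  have e : ∀ i, ∑ j, c i ^ 2 * c j ^ 2 *
      ((n ^ 2 - (x i ^ 2 + x j ^ 2)) * (x i ^ 2 + x j ^ 2 - x i * x j) + (x i * x j) ^ 2)
      = c i ^ 2 * (n^2 * w2 - w4 + (-n^2 * w1 + w3) * x i + (n^2 * n - w2) * x i ^ 2
        + w1 * x i ^ 3 + (- n) * x i ^ 4) := by
    intro i
    rw [sum_quartic' c x _ (c i ^ 2 * (n^2 * x i^2 - x i^4)) (c i ^ 2 * (-n^2 * x i + x i ^ 3))
      (c i ^ 2 * (n^2 - x i ^ 2)) (c i ^ 2 * x i) (c i ^ 2 * (-1)) (fun j => by ring),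
      hc, h1, h2, h3, h4]
    ring
  rw [Finset.sum_congr rfl fun i _ => e i, sum_quartic, hc, h1, h2, h3, h4] at this
  linarith

lemma trace_diag {V : Type*} [Fintype V] [DecidableEq V] (c x : V → ℝ) (n : ℝ)
    (hc : ∑ i, c i ^ 2 = n) (hx : ∑ i, x i ^ 2 ≤ n ^ 2) :
    Matrix.trace (((Matrix.vecMulVec c c + Matrix.diagonal x) *
      (Matrix.vecMulVec c c - Matrix.diagonal x)) ^ 3) ≤ n ^ 6 := by
  obtain ⟨w1, h1⟩ : ∃ w, ∑ i, c i ^ 2 * x i = w := ⟨_, rfl⟩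
  obtain ⟨w2, h2⟩ : ∃ w, ∑ i, c i ^ 2 * x i ^ 2 = w := ⟨_, rfl⟩
  obtain ⟨w3, h3⟩ : ∃ w, ∑ i, c i ^ 2 * x i ^ 3 = w := ⟨_, rfl⟩
  obtain ⟨w4, h4⟩ : ∃ w, ∑ i, c i ^ 2 * x i ^ 4 = w := ⟨_, rfl⟩
  have key := aux_ineq' c x n hc hx w1 w2 w3 w4 h1 h2 h3 h4
  let N : Matrix V V ℝ := Matrix.of fun i j => c i * c j * (n + x i - x j)
  let D : Matrix V V ℝ := Matrix.diagonal fun i => x i ^ 2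
  have hM : (Matrix.vecMulVec c c + Matrix.diagonal x) *
      (Matrix.vecMulVec c c - Matrix.diagonal x) = N - D := by
    rw [add_mul, mul_sub, mul_sub, Matrix.diagonal_mul_diagonal]
    ext i j
    have : (Matrix.vecMulVec c c * Matrix.vecMulVec c c) i j = c i * c j * n := by
      rw [Matrix.mul_apply, ← hc, Finset.mul_sum]
      exact Finset.sum_congr rfl fun k _ => by simp only [Matrix.vecMulVec_apply]; ring
    simp only [Matrix.add_apply, Matrix.sub_apply, this, Matrix.mul_diagonal,
      Matrix.diagonal_mul, Matrix.vecMulVec_apply, N, D, Matrix.of_apply]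
    have : (Matrix.diagonal fun i => x i * x i) i j = (Matrix.diagonal fun i => x i ^ 2) i j := by
      simp only [pow_two]
    rw [this]; ring
  have hexp : Matrix.trace ((N - D) ^ 3) = Matrix.trace (N * N * N) - 3 * Matrix.trace (N * N * D)
      + 3 * Matrix.trace (N * (D * D)) - Matrix.trace (D * D * D) := by
    have : (N - D) ^ 3 = N * N * N - N * N * D - N * D * N - D * (N * N) + N * (D * D)
      + D * N * D + D * (D * N) - D * D * D := by noncomm_ring
    rw [this]
    simp only [Matrix.trace_add, Matrix.trace_sub]
    rw [Matrix.trace_mul_comm (N * D) N, Matrix.trace_mul_comm D (N * N),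
      Matrix.trace_mul_comm (D * N) D, ← Matrix.mul_assoc D D N, Matrix.trace_mul_comm (D * D) N,
      ← Matrix.mul_assoc N N D]
    ring
  have e1 : Matrix.trace (D * D * D) = ∑ i, x i ^ 6 := by
    simp only [D, Matrix.diagonal_mul_diagonal, Matrix.trace_diagonal]
    exact Finset.sum_congr rfl fun i _ => by ring
  have e2 : Matrix.trace (N * (D * D)) = n * w4 := by
    simp only [D, Matrix.diagonal_mul_diagonal, Matrix.trace, Matrix.diag, Matrix.mul_diagonal,
      N, Matrix.of_apply, ← h4, Finset.mul_sum]
    exact Finset.sum_congr rfl fun i _ => by ring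
  have e3 : Matrix.trace (N * N * D) = n^2 * n * w2 - (w4 * n - 2 * w3 * w1 + w2 ^ 2) := by
    simp only [D, Matrix.trace, Matrix.diag, Matrix.mul_diagonal]
    simp only [N, Matrix.of_apply, Matrix.mul_apply]
    have e : ∀ i, ∑ j, c i * c j * (n + x i - x j) * (c j * c i * (n + x j - x i)) =
        c i ^ 2 * (n^3 - w2 + 2 * w1 * x i - n * x i ^ 2) := by
      intro i
      rw [sum_quartic' c x _ (c i ^ 2 * (n^2 - x i ^ 2)) (c i ^ 2 * (2 * x i))
        (-c i ^ 2) 0 0 (fun j => by ring), hc, h1, h2, h3, h4]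
      ring
    simp only [e]
    rw [sum_quartic' c x _ 0 0 (n^3-w2) (2*w1) (-n) (fun j => by ring), hc, h1, h2, h3, h4]
    ring
  have e4 : Matrix.trace (N * N * N) = n ^ 6 - 3 * n^3 * w2 + 3 * n^2 * w1^2 := by
    simp only [Matrix.trace, Matrix.diag, N, Matrix.of_apply, Matrix.mul_apply]
    have e : ∀ i k, ∑ j, c i * c j * (n + x i - x j) * (c j * c k * (n + x j - x k)) =
        c i * c k * ((n + x i) * (n - x k) * n + (x i + x k) * w1 - w2) := by
      intro i k
      rw [sum_quartic' c x _ (c i * c k * ((n + x i) * (n - x k))) (c i * c k * (x i + x k))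
        (-(c i * c k)) 0 0 (fun j => by ring), hc, h1, h2, h3, h4]
      ring
    simp only [e]
    have e' : ∀ i, ∑ k, c i * c k * ((n + x i) * (n - x k) * n + (x i + x k) * w1 - w2) *
       (c k * c i * (n + x k - x i)) = c i ^ 2 *
        (((n + x i) * n ^ 2 + x i * w1 - w2) * (n - x i) * n +
         (((n + x i) * n ^ 2 + x i * w1 - w2) + (w1 - (n + x i) * n) * (n - x i)) * w1 +
         (w1 - (n + x i) * n) * w2) := by
      intro i
      rw [sum_quartic' c x _ (c i ^ 2 * (((n + x i) * n ^ 2 + x i * w1 - w2) * (n - x i)))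
        (c i ^ 2 * (((n + x i) * n ^ 2 + x i * w1 - w2) + (w1 - (n + x i) * n) * (n - x i)))
        (c i ^ 2 * (w1 - (n + x i) * n)) 0 0 (fun j => by ring), hc, h1, h2, h3, h4]
      ring
    simp only [e']
    rw [sum_quartic' c x _ ((n ^ 3 - w2) * n ^ 2 + (n ^ 3 - w2 + (w1 - n ^ 2) * n) * w1
          + (w1 - n ^ 2) * w2)
        ((n^2 + w1) * n ^ 2 - (n ^ 3 - w2) * n + ((n^2 + w1) - (w1 - n ^ 2) - n ^ 2) * w1 - n * w2)
        (-(n^2 + w1) * n + n * w1) 0 0 (fun j => by ring), hc, h1, h2, h3, h4]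
    ring
  rw [hM, hexp, e1, e2, e3, e4]
  have : 0 ≤ ∑ i, x i ^ 6 := Finset.sum_nonneg fun i _ => by positivity
  nlinarith

lemma trace_main {V : Type*} [Fintype V] [DecidableEq V] (S : Matrix V V ℝ)
    (hS : S.IsHermitian) (h1 : ∀ i j, S i j ^ 2 ≤ 1) :
    Matrix.trace (((Matrix.vecMulVec 1 1 + S) *
      (Matrix.vecMulVec 1 1 - S)) ^ 3) ≤ (Fintype.card V : ℝ) ^ 6 := by
  obtain ⟨U, D, hU1, hU2, hD⟩ : ∃ (U : Matrix V V ℝ) (x : V → ℝ), U * U.transpose = 1 ∧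
      U.transpose * U = 1 ∧ S = U * Matrix.diagonal x * U.transpose := by
    refine ⟨hS.eigenvectorUnitary, hS.eigenvalues, ?_, ?_, ?_⟩
    · have := Unitary.coe_mul_star_self hS.eigenvectorUnitary
      rwa [Unitary.coe_star, Matrix.star_eq_conjTranspose, Matrix.conjTranspose_eq_transpose_of_trivial] at this
    · have := Unitary.coe_star_mul_self hS.eigenvectorUnitary
      rwa [Matrix.star_eq_conjTranspose, Matrix.conjTranspose_eq_transpose_of_trivial] at this
    · have := hS.spectral_theorem
      rw [Unitary.conjStarAlgAut_apply, Matrix.star_eq_conjTranspose,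
        Matrix.conjTranspose_eq_transpose_of_trivial] at this
      exact this
  have hc : ∑ i, (U.transpose.mulVec 1) i ^ 2 = (Fintype.card V : ℝ) := by
    have : ∑ i, (U.transpose.mulVec 1) i ^ 2 =
        (U.transpose.mulVec 1) ⬝ᵥ (U.transpose.mulVec 1) := by
      simp only [dotProduct, pow_two]
    rw [this, Matrix.dotProduct_mulVec, Matrix.vecMul_transpose, Matrix.mulVec_mulVec, hU1]
    simp
  have hx : ∑ i, D i ^ 2 ≤ (Fintype.card V : ℝ) ^ 2 := by
    have e : ∑ i, D i ^ 2 = Matrix.trace (S * S) := by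
      have : S * S = U * (Matrix.diagonal D * Matrix.diagonal D * U.transpose) := by
        rw [hD]
        calc _ = U * Matrix.diagonal D * (U.transpose * U) * Matrix.diagonal D * U.transpose := by
              noncomm_ring
          _ = _ := by rw [hU2]; noncomm_ring
      rw [this, Matrix.trace_mul_comm, Matrix.mul_assoc, hU2, Matrix.mul_one,
        Matrix.diagonal_mul_diagonal, Matrix.trace_diagonal]
      simp only [pow_two]
    rw [e]
    have : ∀ i j, S i j * S j i ≤ 1 := by
      intro i j
      have := hS.apply i j
      simp only [star_trivial] at this
      rw [this, ← pow_two]; exact h1 i j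
    simp only [Matrix.trace, Matrix.diag, Matrix.mul_apply]
    calc _ ≤ ∑ i : V, ∑ j : V, (1:ℝ) :=
          Finset.sum_le_sum fun i _ => Finset.sum_le_sum fun j _ => this i j
      _ = _ := by simp [pow_two]
  have hmain := trace_diag (U.transpose.mulVec 1) D _ hc hx
  have hJ : (Matrix.vecMulVec 1 1 : Matrix V V ℝ) = U * Matrix.vecMulVec (U.transpose.mulVec 1)
      (U.transpose.mulVec 1) * U.transpose := by
    rw [Matrix.mul_vecMulVec, Matrix.vecMulVec_mul, Matrix.mulVec_mulVec, hU1,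
      Matrix.vecMul_transpose, Matrix.mulVec_mulVec, hU1, Matrix.one_mulVec]
  have hconj : ∀ A B : Matrix V V ℝ, (U * A * U.transpose) * (U * B * U.transpose) =
      U * (A * B) * U.transpose := by
    intro A B
    calc _ = U * A * (U.transpose * U) * B * U.transpose := by noncomm_ring
      _ = _ := by rw [hU2]; noncomm_ring
  rw [hJ, hD, ← add_mul, ← mul_add, ← sub_mul, ← mul_sub, hconj, pow_succ, pow_two, hconj, hconj,
    Matrix.mul_assoc, Matrix.trace_mul_comm, Matrix.mul_assoc, hU2, Matrix.mul_one, ← pow_two,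
    ← pow_succ]
  exact hmain

def equiv6 (V : Type) : (Fin 6 → V) ≃ V × V × V × V × V × V where
  toFun f := (f 0, f 1, f 2, f 3, f 4, f 5)
  invFun p := ![p.1, p.2.1, p.2.2.1, p.2.2.2.1, p.2.2.2.2.1, p.2.2.2.2.2]
  left_inv f := by funext i; fin_cases i <;> rfl
  right_inv p := rfl

lemma trace_cube {V : Type} [Fintype V] [DecidableEq V] (R B : Matrix V V ℝ) :
    Matrix.trace ((R * B) ^ 3) = ∑ f : Fin 6 → V,
      R (f 0) (f 1) * B (f 1) (f 2) * R (f 2) (f 3) * B (f 3) (f 4) * R (f 4) (f 5)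
        * B (f 5) (f 0) := by
  rw [← (equiv6 V).symm.sum_comp]
  simp only [Fintype.sum_prod_type]
  have : (R * B) ^ 3 = R * (B * (R * (B * (R * B)))) := by noncomm_ring
  rw [this]
  simp only [Matrix.trace, Matrix.diag, Matrix.mul_apply, Finset.mul_sum]
  simp only [equiv6]
  refine Finset.sum_congr rfl fun a _ => Finset.sum_congr rfl fun b _ =>
    Finset.sum_congr rfl fun c _ => Finset.sum_congr rfl fun d _ =>
    Finset.sum_congr rfl fun e _ => Finset.sum_congr rfl fun f _ => ?_
  change _ = R a b * B b c * R c d * B d e * R e f * B f a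
  ring

open Classical in
lemma count_le {V : Type} [Fintype V] (G : ECGraph V) :
    (Nat.card {f : Fin 6 → V // Injective f ∧ IsHom C6A G f} : ℝ) ≤
      (Fintype.card V : ℝ) ^ 6 / 64 := by
  let P : V → V → Prop := fun u v => G.graph.Adj u v ∧ G.color u v = true
  let R : Matrix V V ℝ := Matrix.of fun u v => if P u v then 1 else 0
  let B : Matrix V V ℝ := Matrix.of fun u v => if P u v then 0 else 1
  let S : Matrix V V ℝ := Matrix.of fun u v => if P u v then 1 else -1
  have hP : ∀ u v, P u v ↔ P v u := fun u v => by
    simp only [P, G.graph.adj_comm u v, G.color_symm u v]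
  have hS : S.IsHermitian := by
    ext u v
    simp only [Matrix.conjTranspose_apply, star_trivial, S, Matrix.of_apply, hP v u]
  have h := trace_main S hS (fun i j => by
    simp only [S, Matrix.of_apply]; split_ifs <;> norm_num)
  have hR : Matrix.vecMulVec 1 1 + S = (2:ℝ) • R := by
    ext u v
    simp only [S, R, Matrix.add_apply, Matrix.vecMulVec_apply, Matrix.smul_apply, Matrix.of_apply,
      Pi.one_apply]
    split_ifs <;> norm_num
  have hB : Matrix.vecMulVec 1 1 - S = (2:ℝ) • B := by
    ext u v
    simp only [S, B, Matrix.sub_apply, Matrix.vecMulVec_apply, Matrix.smul_apply, Matrix.of_apply,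
      Pi.one_apply]
    split_ifs <;> norm_num
  rw [hR, hB, smul_mul_smul_comm, smul_pow, Matrix.trace_smul, trace_cube, smul_eq_mul] at h
  have hcard : (Nat.card {f : Fin 6 → V // Injective f ∧ IsHom C6A G f} : ℝ) =
      ∑ f : Fin 6 → V, if Injective f ∧ IsHom C6A G f then (1:ℝ) else 0 := by
    rw [Nat.card_eq_fintype_card, Fintype.card_subtype, Finset.sum_boole]
  have hR0 : ∀ u v, 0 ≤ R u v := fun u v => by
    simp only [R, Matrix.of_apply]; split_ifs <;> norm_num
  have hB0 : ∀ u v, 0 ≤ B u v := fun u v => by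
    simp only [B, Matrix.of_apply]; split_ifs <;> norm_num
  have hle : (∑ f : Fin 6 → V, if Injective f ∧ IsHom C6A G f then (1:ℝ) else 0) ≤
      ∑ f : Fin 6 → V,
      R (f 0) (f 1) * B (f 1) (f 2) * R (f 2) (f 3) * B (f 3) (f 4) * R (f 4) (f 5)
        * B (f 5) (f 0) := by
    refine Finset.sum_le_sum fun f _ => ?_
    split_ifs with hf
    · have hh := hf.2
      have red : ∀ i j : Fin 6, (cycleGraph 6).Adj i j → C6A.color i j = true →
          R (f i) (f j) = 1 := fun i j hij hc => by
        have := hh i j hij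
        rw [hc] at this
        simp only [R, Matrix.of_apply]
        exact if_pos this
      have blue : ∀ i j : Fin 6, (cycleGraph 6).Adj i j → C6A.color i j = false →
          B (f i) (f j) = 1 := fun i j hij hc => by
        have := hh i j hij
        rw [hc] at this
        simp only [B, Matrix.of_apply]
        refine if_neg fun h' => ?_
        have h2 := h'.2
        rw [this.2] at h2
        exact absurd h2 (by decide)
      rw [red 0 1 (by rw [cycleGraph_adj]; decide) (by simp [C6A] <;> decide),
        blue 1 2 (by rw [cycleGraph_adj]; decide) (by simp [C6A] <;> decide),
        red 2 3 (by rw [cycleGraph_adj]; decide) (by simp [C6A] <;> decide),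
        blue 3 4 (by rw [cycleGraph_adj]; decide) (by simp [C6A] <;> decide),
        red 4 5 (by rw [cycleGraph_adj]; decide) (by simp [C6A] <;> decide),
        blue 5 0 (by rw [cycleGraph_adj]; decide) (by simp [C6A] <;> decide)]
      norm_num
    · have := hR0 (f 0) (f 1)
      have := hR0 (f 2) (f 3)
      have := hR0 (f 4) (f 5)
      have := hB0 (f 1) (f 2)
      have := hB0 (f 3) (f 4)
      have := hB0 (f 5) (f 0)
      positivity
  rw [hcard]
  linarith

/-- Every edge-coloured graph `G` on `n` vertices satisfies
`t_inj(C_6^A, G) ≤ (1/2)^6 + O(1/n)` with an absolute implicit constant. -/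
theorem injDensity_C6A_le :
    ∃ C : ℝ, ∀ (V : Type) [Fintype V] (G : ECGraph V),
      injDensity C6A G ≤ (1 / 2 : ℝ) ^ 6 + C / (Fintype.card V : ℝ) := by
  refine ⟨16, fun V _ G => ?_⟩
  unfold injDensity
  rcases lt_or_ge (Fintype.card V) 6 with h | h
  · have : IsEmpty {f : Fin 6 → V // Injective f ∧ IsHom C6A G f} := by
      refine ⟨fun f => ?_⟩
      have := Fintype.card_le_of_injective f.1 f.2.1
      simp at this
      omega
    rw [Nat.card_of_isEmpty]
    simp only [Nat.cast_zero, zero_mul, zero_div]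
    positivity
  · have hc := count_le G
    obtain ⟨m, hm⟩ := Nat.exists_eq_add_of_le h
    rw [hm] at hc ⊢
    simp only [Fintype.card_fin, Nat.add_sub_cancel_left]
    have hf : (6 + m).factorial = (m+6)*(m+5)*(m+4)*(m+3)*(m+2)*(m+1)* m.factorial := by
      rw [add_comm]
      simp only [Nat.factorial_succ]
      ring
    have hp : (0:ℝ) < m.factorial := by positivity
    rw [hf]
    push_cast at hc ⊢
    rw [mul_div_mul_right _ _ hp.ne']
    refine (div_le_div_of_nonneg_right hc (by positivity)).trans ?_
    rw [div_le_iff₀ (by positivity), ← sub_nonneg]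
    have hm6 : (6 + m : ℝ) ≠ 0 := by positivity
    have : ((1 / 2) ^ 6 + 16 / (6 + (m:ℝ))) * ((m + 6) * (m + 5) * (m + 4) * (m + 3) * (m + 2) * (m + 1)) - (6 + (m:ℝ)) ^ 6 / 64 = ((6 + (m:ℝ)) / 64 + 16) * ((m + 5) * (m + 4) * (m + 3) * (m + 2) * (m + 1)) - (6 + (m:ℝ)) ^ 6 / 64 := by
      field_simp
      ring
    rw [this]
    ring_nf
    positivity
end
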